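/- For a nonnegative integer ℓ, a nonnegative integer n, and complex numbers q, x with no vanishing denominators: sum over k from 0 to n of (q^{-3n};q^3)_k * (x;q)_k (q^{1-ℓ}/x;q)_k / ((q;q)_k (-q^{1-ℓ};q)_k (q^{1/2};q)_k (-q^{1/2};q)_k (q^{-3n};q)_k) * q^k equals [(x;q)_ℓ (-x;q)_ℓ / ((x^2;q)_ℓ (-1;q)_ℓ)] times the sum over i from 0 to ℓ of (-1)^i q^{ℓ i} * (1 - x^2 q^{2i-1})/(1 - x^2 q^{-1}) * ((q^{-ℓ};q)_i (x^2 q^{-1};q)_i)/((q;q)_i (x^2 q^{ℓ};q)_i) * ((q^{1+i}x; q^3)_n (q^{2-i}/x; q^3)_n)/((q;q^3)_n (q^2;q^3)_n). (Extension of the first q-Gosper identity with an extra integer parameter.) -/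

import Mathlib

/-- q-Pochhammer symbol `(a; q)_k`. -/
noncomputable def qpoch (a q : ℂ) (k : ℕ) : ℂ := ∏ j ∈ Finset.range k, (1 - a * q ^ j)

theorem qpoch_succ (a q : ℂ) (k : ℕ) : qpoch a q (k + 1) = qpoch a q k * (1 - a * q ^ k) :=
  Finset.prod_range_succ _ _

@[simp] theorem qpoch_zero (a q : ℂ) : qpoch a q 0 = 1 := Finset.prod_range_zero _

theorem qpoch_shift (a q : ℂ) (k : ℕ) :
    qpoch a q k * (1 - a * q ^ k) = (1 - a) * qpoch (a * q) q k := by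
  induction k with
  | zero => simp
  | succ k ih => rw [qpoch_succ, ih, qpoch_succ]; ring

theorem qpoch_ne_zero {a q : ℂ} {k : ℕ} (h : ∀ j < k, a * q ^ j ≠ 1) : qpoch a q k ≠ 0 :=
  Finset.prod_ne_zero_iff.mpr fun j hj =>
    sub_ne_zero.mpr (h j (Finset.mem_range.mp hj)).symm

theorem ContinuousAt.qpoch {a b : ℂ → ℂ} {s : ℂ} (ha : ContinuousAt a s) (hb : ContinuousAt b s)
    (k : ℕ) : ContinuousAt (fun t => qpoch (a t) (b t) k) s := by
  unfold _root_.qpoch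
  exact tendsto_finsetProd _ fun j _ => continuousAt_const.sub (ha.mul (hb.pow j))

section Generic

variable {q : ℂ}

theorem pow_ne_pow_of_generic (hq : q ≠ 0) (hgen : ∀ m : ℤ, m ≠ 0 → q ^ m ≠ 1) {a b : ℕ}
    (hab : a ≠ b) : q ^ a ≠ q ^ b := by
  intro h
  apply hgen ((a : ℤ) - b) (by omega)
  rw [zpow_sub₀ hq, zpow_natCast, zpow_natCast, h, div_self (pow_ne_zero _ hq)]

theorem pow_add_pow_ne_zero_of_generic (hq : q ≠ 0) (hgen : ∀ m : ℤ, m ≠ 0 → q ^ m ≠ 1)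
    (a b : ℕ) : q ^ a + q ^ b ≠ 0 := by
  intro h
  by_cases hab : a = b
  · subst hab
    exact pow_ne_zero a hq (by linear_combination h / 2)
  · apply pow_ne_pow_of_generic hq hgen (a := 2 * a) (b := 2 * b) (by omega)
    rw [mul_comm 2 a, mul_comm 2 b, pow_mul, pow_mul]
    linear_combination (q ^ a - q ^ b) * h

/-- The summand of the first `q`-Gosper sum. -/
noncomputable def gosperTerm (q s x : ℂ) (n k : ℕ) : ℂ :=
  qpoch (q ^ (-(3 * n : ℤ))) (q ^ 3) k * (qpoch x q k * qpoch (q / x) q k) /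
    (qpoch q q k * qpoch (-q) q k * qpoch s q k * qpoch (-s) q k *
      qpoch (q ^ (-(3 * n : ℤ))) q k) * q ^ k

theorem zpow_neg_mul_pow_ne_one (hq : q ≠ 0) (hgen : ∀ m : ℤ, m ≠ 0 → q ^ m ≠ 1) {c j : ℕ}
    (h : j ≠ c) : q ^ (-(c : ℤ)) * q ^ j ≠ 1 := by
  rw [← zpow_natCast q j, ← zpow_add₀ hq]
  exact hgen _ (by omega)

theorem gosperTerm_denom_ne_zero {s : ℂ} (hs : s ^ 2 = q) (hq : q ≠ 0)
    (hgen : ∀ m : ℤ, m ≠ 0 → q ^ m ≠ 1) (k : ℕ) :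
    qpoch q q k ≠ 0 ∧ qpoch (-q) q k ≠ 0 ∧ qpoch s q k ≠ 0 ∧ qpoch (-s) q k ≠ 0 := by
  have hodd (j : ℕ) : (s * q ^ j) ^ 2 ≠ 1 := by
    rw [mul_pow, hs, ← pow_mul, ← pow_succ']
    simpa using pow_ne_pow_of_generic hq hgen (a := j * 2 + 1) (b := 0) (by omega)
  refine ⟨qpoch_ne_zero fun j _ => ?_, qpoch_ne_zero fun j _ h => ?_,
    qpoch_ne_zero fun j _ h => hodd j (by rw [h, one_pow]),
    qpoch_ne_zero fun j _ h => hodd j (by linear_combination (1 - s * q ^ j) * h)⟩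
  · rw [← pow_succ']
    simpa using pow_ne_pow_of_generic hq hgen (a := j + 1) (b := 0) (by omega)
  · apply pow_add_pow_ne_zero_of_generic hq hgen (j + 1) 0
    linear_combination -h

theorem gosperTerm_succ {s x : ℂ} (hs : s ^ 2 = q) (hq : q ≠ 0) (hx : x ≠ 0)
    (hgen : ∀ m : ℤ, m ≠ 0 → q ^ m ≠ 1) {n k : ℕ} (hk : k < 3 * n) :
    gosperTerm q s x n (k + 1) * ((1 - q * (q ^ k) ^ 2) * (1 - q ^ 2 * (q ^ k) ^ 2) *
        (1 - q ^ (-(3 * n : ℤ)) * q ^ k)) =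
      gosperTerm q s x n k * ((1 - q ^ (-(3 * n : ℤ)) * (q ^ k) ^ 3) * (1 - x * q ^ k) *
        (1 - q / x * q ^ k) * q) := by
  obtain ⟨h1, h2, h3, h4⟩ := gosperTerm_denom_ne_zero hs hq hgen k
  obtain ⟨h1', h2', h3', h4'⟩ := gosperTerm_denom_ne_zero hs hq hgen (k + 1)
  have hN (j : ℕ) (hj : j < 3 * n) : q ^ (-(3 * n : ℤ)) * q ^ j ≠ 1 := by
    simpa using zpow_neg_mul_pow_ne_one hq hgen (c := 3 * n) (j := j) (by omega)
  have h5 : qpoch (q ^ (-(3 * n : ℤ))) q k ≠ 0 := qpoch_ne_zero fun j hj => hN j (by omega)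
  have h6 := hN k hk
  have hpow : (q ^ 3) ^ k = (q ^ k) ^ 3 := by rw [← pow_mul, ← pow_mul, mul_comm]
  unfold gosperTerm
  rw [qpoch_succ] at h1' h2' h3' h4'
  have e1 := right_ne_zero_of_mul h1'
  have e2 := right_ne_zero_of_mul h2'
  have e3 := right_ne_zero_of_mul h3'
  have e4 := right_ne_zero_of_mul h4'
  have e5 := sub_ne_zero.mpr h6.symm
  simp only [qpoch_succ, hpow]
  generalize q ^ (-(3 * n : ℤ)) = N at *
  have f1 : 1 - q * (q ^ k) ^ 2 = (1 - s * q ^ k) * (1 - -s * q ^ k) := by rw [← hs]; ring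
  have f2 : 1 - q ^ 2 * (q ^ k) ^ 2 = (1 - q * q ^ k) * (1 - -q * q ^ k) := by ring
  rw [f1, f2, pow_succ q k]
  generalize 1 - q * q ^ k = y₁ at *
  generalize 1 - -q * q ^ k = y₂ at *
  generalize 1 - s * q ^ k = y₃ at *
  generalize 1 - -s * q ^ k = y₄ at *
  generalize 1 - N * q ^ k = y₅ at *
  field_simp

theorem gosperTerm_shift {s x : ℂ} (hs : s ^ 2 = q) (hq : q ≠ 0)
    (hgen : ∀ m : ℤ, m ≠ 0 → q ^ m ≠ 1) {n k : ℕ} (hk : k ≤ n) {N : ℂ}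
    (hN : N = q ^ (-(3 * n : ℤ))) :
    gosperTerm q s x n k * ((1 - N * q ^ k / q) * (1 - N * q ^ k / q ^ 2) *
        (1 - N * q ^ k / q ^ 3)) =
      gosperTerm q s x (n + 1) k * ((1 - N / q) * (1 - N / q ^ 2) *
        (1 - N * (q ^ k) ^ 3 / q ^ 3)) := by
  obtain ⟨h1, h2, h3, h4⟩ := gosperTerm_denom_ne_zero hs hq hgen k
  have hne (c j : ℕ) (h : j ≠ c) : q ^ (-(c : ℤ)) * q ^ j ≠ 1 :=
    zpow_neg_mul_pow_ne_one hq hgen h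
  have hN' : q ^ (-(3 * (n + 1 : ℕ) : ℤ)) = N / q ^ 3 := by
    rw [hN, ← zpow_natCast q 3, ← zpow_sub₀ hq]; congr 1; push_cast; ring
  have h5 : qpoch N q k ≠ 0 := qpoch_ne_zero fun j hj => by
    rw [hN]; simpa using hne (3 * n) j (by omega)
  have h6 : qpoch (N / q ^ 3) q k ≠ 0 := qpoch_ne_zero fun j hj => by
    rw [← hN']; simpa using hne (3 * (n + 1)) j (by omega)
  have hn3 : 1 - N / q ^ 3 ≠ 0 := by
    rw [← hN', sub_ne_zero]; simpa using (hne (3 * (n + 1)) 0 (by omega)).symm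
  have s1 := qpoch_shift (N / q ^ 3) (q ^ 3) k
  have t1 := qpoch_shift (N / q ^ 3) q k
  have t2 := qpoch_shift (N / q ^ 2) q k
  have t3 := qpoch_shift (N / q) q k
  rw [div_mul_cancel₀ _ (pow_ne_zero 3 hq), ← pow_mul, mul_comm 3 k, pow_mul] at s1
  rw [show N / q ^ 3 * q = N / q ^ 2 by field_simp] at t1
  rw [show N / q ^ 2 * q = N / q by field_simp] at t2
  rw [show N / q * q = N by field_simp] at t3
  have key : qpoch N q k * ((1 - N / q) * (1 - N / q ^ 2) * (1 - N / q ^ 3)) =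
      qpoch (N / q ^ 3) q k * ((1 - N * q ^ k / q) * (1 - N * q ^ k / q ^ 2) *
        (1 - N * q ^ k / q ^ 3)) := by
    linear_combination (-(1 - N / q ^ 2) * (1 - N / q ^ 3)) * t3
      - (1 - N / q ^ 3) * (1 - N / q * q ^ k) * t2
      - (1 - N / q * q ^ k) * (1 - N / q ^ 2 * q ^ k) * t1
  unfold gosperTerm
  rw [hN', ← hN]
  generalize (1 - N * q ^ k / q) * (1 - N * q ^ k / q ^ 2) * (1 - N * q ^ k / q ^ 3) = A at *
  generalize (1 - N / q) * (1 - N / q ^ 2) = B at *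
  have key2 : qpoch N (q ^ 3) k / qpoch N q k * A =
      qpoch (N / q ^ 3) (q ^ 3) k / qpoch (N / q ^ 3) q k *
        (B * (1 - N * (q ^ k) ^ 3 / q ^ 3)) := by
    rw [div_mul_eq_mul_div, div_mul_eq_mul_div, div_eq_div_iff h5 h6]
    apply mul_right_cancel₀ hn3
    linear_combination (-qpoch N (q ^ 3) k * (1 - N / q ^ 3)) * key
      - (qpoch N q k * B * (1 - N / q ^ 3)) * s1
  calc _ = (qpoch N (q ^ 3) k / qpoch N q k * A) * (qpoch x q k * qpoch (q / x) q k) /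
    (qpoch q q k * qpoch (-q) q k * qpoch s q k * qpoch (-s) q k) * q ^ k := by field_simp
    _ = _ := by rw [key2]; field_simp

theorem gosper_sum_succ {s x : ℂ} (hs : s ^ 2 = q) (hq : q ≠ 0) (hx : x ≠ 0)
    (hgen : ∀ m : ℤ, m ≠ 0 → q ^ m ≠ 1) (n : ℕ) {N : ℂ} (hN : N = q ^ (-(3 * n : ℤ))) :
    (1 - N / q) * (1 - N / q ^ 2) * ∑ k ∈ Finset.range (n + 2), gosperTerm q s x (n + 1) k =
      (1 - N * x / q ^ 2) * (1 - N / (q * x)) *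
        ∑ k ∈ Finset.range (n + 1), gosperTerm q s x n k := by
  have hM : N * q ^ (3 * n) = 1 := by
    rw [hN, ← zpow_natCast q, ← zpow_add₀ hq]; simp
  have hN0 : N ≠ 0 := left_ne_zero_of_mul_eq_one hM
  have hfac (c k : ℕ) (h : k ≠ 3 * n + c) : 1 - N * q ^ k / q ^ c ≠ 0 := by
    intro h0
    apply pow_ne_pow_of_generic hq hgen h
    have : q ^ c = N * q ^ k := by
      have := pow_ne_zero c hq
      field_simp at h0
      linear_combination h0
    rw [pow_add, this]
    linear_combination (-q ^ k) * hM
  have hodd (k : ℕ) : 1 - q * (q ^ k) ^ 2 ≠ 0 := by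
    rw [sub_ne_zero, ← pow_mul, ← pow_succ']
    simpa using pow_ne_pow_of_generic hq hgen (a := 0) (b := k * 2 + 1) (by omega)
  have heven (k : ℕ) : 1 - q ^ 2 * (q ^ k) ^ 2 ≠ 0 := by
    rw [sub_ne_zero, ← pow_mul, ← pow_add]
    simpa using pow_ne_pow_of_generic hq hgen (a := 0) (b := 2 + k * 2) (by omega)
  have hN' : q ^ (-(3 * (n + 1 : ℕ) : ℤ)) = N / q ^ 3 := by
    rw [hN, ← zpow_natCast q 3, ← zpow_sub₀ hq]; congr 1; push_cast; ring
  have partialSum (m : ℕ) (hm : m ≤ n + 1) :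
      ∑ k ∈ Finset.range m, ((1 - N / q) * (1 - N / q ^ 2) * gosperTerm q s x (n + 1) k -
        (1 - N * x / q ^ 2) * (1 - N / (q * x)) * gosperTerm q s x n k) =
      gosperTerm q s x (n + 1) m * ((1 - N / q) * (1 - N / q ^ 2) * (-N / q ^ 2) *
        (1 - (q ^ m) ^ 2 / q) * (1 - (q ^ m) ^ 2) /
          (q ^ m * (1 - N * q ^ m / q ^ 2) * (1 - N * q ^ m / q ^ 3))) := by
    induction m with
    | zero => simp
    | succ m ih =>
      rw [Finset.sum_range_succ, ih (by omega)]
      have hsucc := gosperTerm_succ hs hq hx hgen (n := n + 1) (k := m) (by omega)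
      have hshift := gosperTerm_shift (x := x) hs hq hgen (k := m) (by omega) hN
      have f1 := hfac 1 m (by omega)
      have f2 := hfac 2 m (by omega)
      have f3 := hfac 3 m (by omega)
      have f4 := hodd m
      have f5 := heven m
      have hK := pow_ne_zero m hq
      rw [pow_one] at f1
      rw [hN'] at hsucc
      rw [show 1 - N / q ^ 3 * q ^ m = 1 - N * q ^ m / q ^ 3 by ring] at hsucc
      rw [← eq_div_iff (mul_ne_zero (mul_ne_zero f4 f5) f3)] at hsucc
      rw [← eq_div_iff (mul_ne_zero (mul_ne_zero f1 f2) f3)] at hshift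
      rw [hsucc, hshift]
      rw [show N * q ^ (m + 1) / q ^ 2 = N * q ^ m / q by rw [pow_succ]; field_simp,
        show N * q ^ (m + 1) / q ^ 3 = N * q ^ m / q ^ 2 by rw [pow_succ]; field_simp,
        show 1 - (q ^ (m + 1)) ^ 2 / q = 1 - q * (q ^ m) ^ 2 by field_simp; ring,
        show 1 - (q ^ (m + 1)) ^ 2 = 1 - q ^ 2 * (q ^ m) ^ 2 by ring,
        show q ^ (m + 1) = q ^ m * q by rw [pow_succ]]
      generalize gosperTerm q s x (n + 1) m = t
      generalize q ^ m = K at *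
      have g1 : 1 - N * K / q = (q - N * K) / q := by field_simp
      have g2 : 1 - N * K / q ^ 2 = (q ^ 2 - N * K) / q ^ 2 := by field_simp
      have g3 : 1 - N * K / q ^ 3 = (q ^ 3 - N * K) / q ^ 3 := by field_simp
      simp only [g1, g2, g3] at f1 f2 f3 ⊢
      have d1 := (div_ne_zero_iff.mp f1).1
      have d2 := (div_ne_zero_iff.mp f2).1
      have d3 := (div_ne_zero_iff.mp f3).1
      field_simp
      ring
  have htop := partialSum (n + 1) le_rfl
  rw [Finset.sum_sub_distrib, ← Finset.mul_sum, ← Finset.mul_sum] at htop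
  rw [Finset.sum_range_succ, mul_add]
  have f2 := hfac 2 (n + 1) (by omega)
  have f3 := hfac 3 (n + 1) (by omega)
  have hK := pow_ne_zero (n + 1) hq
  have hNK : N * (q ^ (n + 1)) ^ 3 = q ^ 3 := by
    linear_combination q ^ 3 * hM
  generalize q ^ (n + 1) = K at *
  have hNe : N = q ^ 3 / K ^ 3 := by field_simp; exact hNK
  have hlast : -N / q ^ 2 * (1 - K ^ 2 / q) * (1 - K ^ 2) /
      (K * (1 - N * K / q ^ 2) * (1 - N * K / q ^ 3)) = -1 := by
    rw [div_eq_iff (mul_ne_zero (mul_ne_zero hK f2) f3), hNe]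
    field_simp
    ring
  linear_combination htop + gosperTerm q s x (n + 1) (n + 1) * (1 - N / q) * (1 - N / q ^ 2) * hlast

/-- The first `q`-Gosper identity, for `q` not a root of unity. -/
theorem gosper_sum {s x : ℂ} (hs : s ^ 2 = q) (hq : q ≠ 0) (hx : x ≠ 0)
    (hgen : ∀ m : ℤ, m ≠ 0 → q ^ m ≠ 1) (n : ℕ) :
    ∑ k ∈ Finset.range (n + 1), gosperTerm q s x n k =
      (qpoch (q * x) (q ^ 3) n * qpoch (q ^ 2 / x) (q ^ 3) n) /
        (qpoch q (q ^ 3) n * qpoch (q ^ 2) (q ^ 3) n) := by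
  induction n with
  | zero => simp [gosperTerm]
  | succ n ih =>
    have hrec := gosper_sum_succ hs hq hx hgen n rfl
    rw [ih] at hrec
    have h1 : 1 - q * q ^ (3 * n) ≠ 0 := by
      rw [sub_ne_zero, ← pow_succ']
      simpa using pow_ne_pow_of_generic hq hgen (a := 0) (b := 3 * n + 1) (by omega)
    have h2 : 1 - q ^ 2 * q ^ (3 * n) ≠ 0 := by
      rw [sub_ne_zero, ← pow_add]
      simpa using pow_ne_pow_of_generic hq hgen (a := 0) (b := 2 + 3 * n) (by omega)
    have hM := pow_ne_zero (3 * n) hq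
    have hNM : q ^ (-(3 * n : ℤ)) = (q ^ (3 * n))⁻¹ := by
      rw [zpow_neg, ← zpow_natCast]; push_cast; rfl
    rw [hNM] at hrec
    simp only [qpoch_succ, ← pow_mul q 3 n]
    generalize q ^ (3 * n) = M at *
    have e1 : 1 - M⁻¹ / q = -(1 - q * M) / (M * q) := by field_simp; ring
    have e2 : 1 - M⁻¹ / q ^ 2 = -(1 - q ^ 2 * M) / (M * q ^ 2) := by field_simp; ring
    have e3 : 1 - M⁻¹ * x / q ^ 2 = -(1 - q ^ 2 / x * M) * x / (M * q ^ 2) := by field_simp; ring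
    have e4 : 1 - M⁻¹ / (q * x) = -(1 - q * x * M) / (M * (q * x)) := by field_simp; ring
    rw [e1, e2, e3, e4] at hrec
    have hne : -(1 - q * M) / (M * q) * (-(1 - q ^ 2 * M) / (M * q ^ 2)) ≠ 0 := by
      exact mul_ne_zero (div_ne_zero (neg_ne_zero.mpr h1) (by positivity))
        (div_ne_zero (neg_ne_zero.mpr h2) (by positivity))
    apply mul_left_cancel₀ hne
    rw [hrec]
    field_simp

/-- The coefficients expanding the summand of the extended sum into `q`-Gosper summands. -/
noncomputable def gosperCoeff (q x : ℂ) (ℓ i : ℕ) : ℂ :=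
  (-1 : ℂ) ^ i * q ^ (ℓ * i) * ((1 - x ^ 2 * q ^ (2 * (i : ℤ) - 1)) / (1 - x ^ 2 / q)) *
    (qpoch (q ^ (-(ℓ : ℤ))) q i * qpoch (x ^ 2 / q) q i) /
    (qpoch q q i * qpoch (x ^ 2 * q ^ ℓ) q i)

theorem zpow_two_mul_sub_one (hq : q ≠ 0) (i : ℕ) : q ^ (2 * (i : ℤ) - 1) = (q ^ i) ^ 2 / q := by
  rw [zpow_sub_one₀ hq, div_eq_mul_inv, ← pow_mul, mul_comm i]
  norm_cast

theorem sq_mul_pow_ne_pow {x : ℂ} (hq : q ≠ 0) (hgx : ∀ m : ℤ, x ^ 2 ≠ q ^ m) (a b : ℕ) :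
    x ^ 2 * q ^ a ≠ q ^ b := by
  intro h
  apply hgx ((b : ℤ) - a)
  rw [zpow_sub₀ hq, zpow_natCast, zpow_natCast, ← h, mul_div_cancel_right₀ _ (pow_ne_zero _ hq)]

theorem one_sub_sq_mul_pow_ne_zero {x : ℂ} (hq : q ≠ 0) (hgx : ∀ m : ℤ, x ^ 2 ≠ q ^ m) (a : ℕ) :
    1 - x ^ 2 * q ^ a ≠ 0 := by
  rw [sub_ne_zero]
  simpa using (sq_mul_pow_ne_pow hq hgx a 0).symm

theorem one_sub_sq_mul_pow_div_ne_zero {x : ℂ} (hq : q ≠ 0) (hgx : ∀ m : ℤ, x ^ 2 ≠ q ^ m)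
    (a : ℕ) : 1 - x ^ 2 * q ^ a / q ≠ 0 := by
  rw [sub_ne_zero, ne_comm, Ne, div_eq_one_iff_eq hq]
  simpa using sq_mul_pow_ne_pow hq hgx a 1

theorem one_sub_pow_succ_ne_zero (hq : q ≠ 0) (hgen : ∀ m : ℤ, m ≠ 0 → q ^ m ≠ 1) (i : ℕ) :
    1 - q * q ^ i ≠ 0 := by
  rw [sub_ne_zero, ← pow_succ']
  simpa using pow_ne_pow_of_generic hq hgen (a := 0) (b := i + 1) (by omega)

theorem gosperCoeff_denom_ne_zero {x : ℂ} (hq : q ≠ 0) (hgen : ∀ m : ℤ, m ≠ 0 → q ^ m ≠ 1)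
    (hgx : ∀ m : ℤ, x ^ 2 ≠ q ^ m) (ℓ i : ℕ) :
    qpoch q q i ≠ 0 ∧ qpoch (x ^ 2 * q ^ ℓ) q i ≠ 0 ∧ 1 - x ^ 2 / q ≠ 0 := by
  refine ⟨qpoch_ne_zero fun j _ h => one_sub_pow_succ_ne_zero hq hgen j (by rw [h, sub_self]),
    qpoch_ne_zero fun j _ => ?_, ?_⟩
  · rw [mul_assoc, ← pow_add]
    simpa using sq_mul_pow_ne_pow hq hgx (ℓ + j) 0
  · simpa using one_sub_sq_mul_pow_div_ne_zero hq hgx 0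

theorem gosperCoeff_succ {x : ℂ} (hq : q ≠ 0) (hgen : ∀ m : ℤ, m ≠ 0 → q ^ m ≠ 1)
    (hgx : ∀ m : ℤ, x ^ 2 ≠ q ^ m) (ℓ i : ℕ) :
    gosperCoeff q x ℓ (i + 1) * ((1 - x ^ 2 * (q ^ i) ^ 2 / q) * (1 - q * q ^ i) *
        (1 - x ^ 2 * q ^ ℓ * q ^ i)) =
      gosperCoeff q x ℓ i * (-((q ^ ℓ - q ^ i) * (1 - x ^ 2 * q * (q ^ i) ^ 2) *
        (1 - x ^ 2 / q * q ^ i))) := by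
  obtain ⟨h1, h2, h3⟩ := gosperCoeff_denom_ne_zero hq hgen hgx ℓ i
  have e1 := one_sub_pow_succ_ne_zero hq hgen i
  have e2 := one_sub_sq_mul_pow_ne_zero hq hgx (ℓ + i)
  rw [pow_add, ← mul_assoc] at e2
  have hL := pow_ne_zero ℓ hq
  have hneg : q ^ (-(ℓ : ℤ)) = (q ^ ℓ)⁻¹ := by rw [zpow_neg, zpow_natCast]
  unfold gosperCoeff
  simp only [zpow_two_mul_sub_one hq, qpoch_succ, hneg]
  have g1 : (q ^ (i + 1)) ^ 2 / q = q * (q ^ i) ^ 2 := by field_simp; ring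
  have g2 : q ^ ℓ - q ^ i = q ^ ℓ * (1 - (q ^ ℓ)⁻¹ * q ^ i) := by field_simp
  have g3 : q ^ (ℓ * (i + 1)) = q ^ (ℓ * i) * q ^ ℓ := by rw [← pow_add]; rfl
  rw [g1, g2, g3, pow_succ (-1 : ℂ) i, ← mul_assoc (x ^ 2) q, mul_div_assoc (x ^ 2)]
  generalize 1 - q * q ^ i = y₁ at *
  generalize 1 - x ^ 2 * q ^ ℓ * q ^ i = y₂ at *
  generalize 1 - x ^ 2 / q = y₃ at *
  generalize 1 - x ^ 2 / q * q ^ i = y₄ at *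
  generalize 1 - (q ^ ℓ)⁻¹ * q ^ i = y₅ at *
  field_simp

theorem gosperCoeff_shift {x : ℂ} (hq : q ≠ 0) (hgen : ∀ m : ℤ, m ≠ 0 → q ^ m ≠ 1)
    (hgx : ∀ m : ℤ, x ^ 2 ≠ q ^ m) (ℓ i : ℕ) :
    gosperCoeff q x (ℓ + 1) i * ((q ^ ℓ * q - q ^ i) * (1 - x ^ 2 * q ^ ℓ * q ^ i)) =
      gosperCoeff q x ℓ i * (q ^ i * (q ^ ℓ * q - 1) * (1 - x ^ 2 * q ^ ℓ)) := by
  obtain ⟨h1, h2, h3⟩ := gosperCoeff_denom_ne_zero hq hgen hgx ℓ i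
  obtain ⟨-, h2', -⟩ := gosperCoeff_denom_ne_zero hq hgen hgx (ℓ + 1) i
  have hL := pow_ne_zero ℓ hq
  have hneg : q ^ (-(ℓ : ℤ)) = (q ^ ℓ)⁻¹ := by rw [zpow_neg, zpow_natCast]
  have hneg' : q ^ (-((ℓ + 1 : ℕ) : ℤ)) = (q ^ ℓ * q)⁻¹ := by
    rw [zpow_neg, zpow_natCast, pow_succ]
  have s1 := qpoch_shift ((q ^ ℓ * q)⁻¹) q i
  have s2 := qpoch_shift (x ^ 2 * q ^ ℓ) q i
  rw [show (q ^ ℓ * q)⁻¹ * q = (q ^ ℓ)⁻¹ by field_simp] at s1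
  rw [mul_assoc (x ^ 2) _ q, ← pow_succ] at s2
  have s1' : qpoch ((q ^ ℓ * q)⁻¹) q i * (q ^ ℓ * q - q ^ i) =
      (q ^ ℓ * q - 1) * qpoch ((q ^ ℓ)⁻¹) q i := by
    have e1 : 1 - (q ^ ℓ * q)⁻¹ * q ^ i = (q ^ ℓ * q - q ^ i) / (q ^ ℓ * q) := by field_simp
    have e2 : 1 - (q ^ ℓ * q)⁻¹ = (q ^ ℓ * q - 1) / (q ^ ℓ * q) := by field_simp
    rw [e1, e2, mul_div_assoc', div_mul_eq_mul_div] at s1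
    exact (div_left_inj' (mul_ne_zero hL hq)).mp s1
  unfold gosperCoeff
  simp only [hneg, hneg']
  rw [show q ^ ((ℓ + 1) * i) = q ^ (ℓ * i) * q ^ i by rw [← pow_add]; congr 1; ring]
  generalize qpoch ((q ^ ℓ * q)⁻¹) q i = u' at *
  generalize qpoch ((q ^ ℓ)⁻¹) q i = u at *
  generalize 1 - x ^ 2 * q ^ (2 * (i : ℤ) - 1) = y₁ at *
  generalize 1 - x ^ 2 / q = y₂ at *
  generalize 1 - x ^ 2 * q ^ ℓ = y₃ at *
  generalize 1 - x ^ 2 * q ^ ℓ * q ^ i = y₄ at *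
  generalize q ^ ℓ * q - q ^ i = y₅ at *
  generalize q ^ ℓ * q - 1 = y₆ at *
  have key : u' / qpoch (x ^ 2 * q ^ (ℓ + 1)) q i * (y₅ * y₄) =
      u / qpoch (x ^ 2 * q ^ ℓ) q i * (y₆ * y₃) := by
    rw [div_mul_eq_mul_div, div_mul_eq_mul_div, div_eq_div_iff h2' h2]
    linear_combination (y₄ * qpoch (x ^ 2 * q ^ ℓ) q i) * s1' + y₆ * u * s2
  calc _ = (u' / qpoch (x ^ 2 * q ^ (ℓ + 1)) q i * (y₅ * y₄)) * ((-1) ^ i * q ^ (ℓ * i) * q ^ i *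
      (y₁ / y₂) * qpoch (x ^ 2 / q) q i / qpoch q q i) := by field_simp
    _ = _ := by rw [key]; field_simp

/-- The recursion in `ℓ` behind the terminating `₆φ₅` summation. -/
theorem gosperCoeff_sum_succ {x : ℂ} (hq : q ≠ 0) (hgen : ∀ m : ℤ, m ≠ 0 → q ^ m ≠ 1)
    (hgx : ∀ m : ℤ, x ^ 2 ≠ q ^ m) (ℓ k : ℕ) {w : ℕ → ℂ}
    (hw : ∀ i, w (i + 1) * (q ^ k - x * q ^ i) = w i * (1 - x * q ^ k * q ^ i)) :
    ∑ i ∈ Finset.range (ℓ + 2), gosperCoeff q x (ℓ + 1) i * w i =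
      (1 - x ^ 2 * q ^ ℓ) * (q ^ k + q ^ ℓ) / ((q ^ k - x * q ^ ℓ) * (1 + x * q ^ ℓ)) *
        ∑ i ∈ Finset.range (ℓ + 1), gosperCoeff q x ℓ i * w i := by
  have hz := pow_ne_zero k hq
  have hL := pow_ne_zero ℓ hq
  have hsq (a b : ℕ) : q ^ b - x * q ^ a ≠ 0 := fun h => by
    apply sq_mul_pow_ne_pow hq hgx (a * 2) (b * 2)
    rw [pow_mul, pow_mul]
    linear_combination (-q ^ b - x * q ^ a) * h
  have f2 : 1 + x * q ^ ℓ ≠ 0 := fun h => by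
    apply sq_mul_pow_ne_pow hq hgx (ℓ * 2) 0
    rw [pow_mul, pow_zero]
    linear_combination (x * q ^ ℓ - 1) * h
  have f1 := hsq ℓ k
  have f3 : q ^ ℓ * q - 1 ≠ 0 := by
    have := one_sub_pow_succ_ne_zero hq hgen ℓ
    intro h
    exact this (by linear_combination -h)
  have f4 := one_sub_sq_mul_pow_ne_zero hq hgx ℓ
  have partialSum (m : ℕ) (hm : m ≤ ℓ + 1) :
      ∑ i ∈ Finset.range m, (gosperCoeff q x (ℓ + 1) i * w i -
        (1 - x ^ 2 * q ^ ℓ) * (q ^ k + q ^ ℓ) / ((q ^ k - x * q ^ ℓ) * (1 + x * q ^ ℓ)) *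
          (gosperCoeff q x ℓ i * w i)) =
      gosperCoeff q x (ℓ + 1) m * w m * ((1 - q ^ m) * (q * q ^ k - x * q ^ m) *
        (1 - x ^ 2 * q ^ ℓ * q ^ m) * (1 + x * q ^ m / q) * q ^ ℓ /
        (q ^ m * (q ^ ℓ * q - 1) * (1 - x ^ 2 * (q ^ m) ^ 2 / q) * (q ^ k - x * q ^ ℓ) *
          (1 + x * q ^ ℓ))) := by
    induction m with
    | zero => simp
    | succ m ih =>
      rw [Finset.sum_range_succ, ih (by omega)]
      have hsucc := gosperCoeff_succ hq hgen hgx (ℓ + 1) m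
      have hshift := gosperCoeff_shift hq hgen hgx ℓ m
      have hw' := hw m
      have hI := pow_ne_zero m hq
      have d1 := one_sub_sq_mul_pow_div_ne_zero hq hgx (m * 2)
      have d2 := one_sub_pow_succ_ne_zero hq hgen m
      have d3 := one_sub_sq_mul_pow_ne_zero hq hgx (ℓ + 1 + m)
      have d4 := hsq m k
      have d5 := one_sub_sq_mul_pow_ne_zero hq hgx (m * 2 + 1)
      rw [pow_mul] at d1
      rw [pow_add, ← mul_assoc] at d3
      rw [pow_add, pow_mul, pow_one, mul_comm _ q, ← mul_assoc] at d5
      rw [← eq_div_iff (mul_ne_zero (mul_ne_zero d1 d2) d3)] at hsucc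
      rw [eq_comm, ← eq_div_iff (mul_ne_zero (mul_ne_zero hI f3) f4)] at hshift
      rw [← eq_div_iff d4] at hw'
      rw [hsucc, hshift, hw']
      rw [show x ^ 2 * (q ^ (m + 1)) ^ 2 / q = x ^ 2 * q * (q ^ m) ^ 2 by field_simp; ring]
      rw [pow_succ q m, pow_succ q ℓ] at *
      generalize gosperCoeff q x (ℓ + 1) m = t
      generalize w m = v
      generalize q ^ m = I at *
      generalize q ^ ℓ = L at *
      generalize q ^ k = z at *
      have g1 : 1 - x ^ 2 * I ^ 2 / q = (q - x ^ 2 * I ^ 2) / q := by field_simp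
      rw [g1] at d1 ⊢
      have d1' := (div_ne_zero_iff.mp d1).1
      clear hsucc hshift hw' hgen hgx hsq hL hz ih hw
      generalize he1 : q - x ^ 2 * I ^ 2 = e₁ at *
      generalize he2 : 1 - q * I = e₂ at *
      generalize he3 : 1 - x ^ 2 * (L * q) * I = e₃ at *
      generalize he4 : z - x * I = e₄ at *
      generalize he5 : 1 - x ^ 2 * q * I ^ 2 = e₅ at *
      generalize he6 : L * q - 1 = e₆ at *
      generalize he7 : z - x * L = e₇ at *
      generalize he8 : 1 + x * L = e₈ at *
      generalize he9 : 1 - x ^ 2 * L = e₉ at *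
      rw [show 1 - I * q = e₂ by rw [← he2]; ring]
      field_simp
      subst he1 he2 he3 he4 he5 he6 he7 he8 he9
      ring
  have htop := partialSum (ℓ + 1) le_rfl
  rw [Finset.sum_sub_distrib, ← Finset.mul_sum] at htop
  rw [Finset.sum_range_succ]
  have d1 := one_sub_sq_mul_pow_ne_zero hq hgx (ℓ * 2 + 1)
  have d1' : 1 - x ^ 2 * (q ^ ℓ) ^ 2 * q ≠ 0 := by
    rwa [pow_add, pow_mul, pow_one, ← mul_assoc] at d1
  have hlast : (1 - q ^ (ℓ + 1)) * (q * q ^ k - x * q ^ (ℓ + 1)) *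
        (1 - x ^ 2 * q ^ ℓ * q ^ (ℓ + 1)) * (1 + x * q ^ (ℓ + 1) / q) * q ^ ℓ /
        (q ^ (ℓ + 1) * (q ^ ℓ * q - 1) * (1 - x ^ 2 * (q ^ (ℓ + 1)) ^ 2 / q) *
          (q ^ k - x * q ^ ℓ) * (1 + x * q ^ ℓ)) = -1 := by
    rw [show x ^ 2 * (q ^ (ℓ + 1)) ^ 2 / q = x ^ 2 * (q ^ ℓ) ^ 2 * q by field_simp; ring,
      show x * q ^ (ℓ + 1) / q = x * q ^ ℓ by rw [pow_succ]; field_simp, pow_succ q ℓ]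
    rw [div_eq_iff (by simp only [mul_ne_zero_iff]; exact ⟨⟨⟨⟨⟨hL, hq⟩, f3⟩, d1'⟩, f1⟩, f2⟩)]
    ring
  rw [hlast] at htop
  linear_combination htop

theorem extension_summand_eq {x : ℂ} (hq : q ≠ 0) (hx : x ≠ 0)
    (hgen : ∀ m : ℤ, m ≠ 0 → q ^ m ≠ 1) (hx2 : 1 - x ^ 2 / q ≠ 0) (ℓ k : ℕ)
    (hgx : ℓ ≠ 0 → ∀ m : ℤ, x ^ 2 ≠ q ^ m) :
    qpoch x q k * qpoch (q ^ (1 - ℓ : ℤ) / x) q k / qpoch (-(q ^ (1 - ℓ : ℤ))) q k =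
      (qpoch x q ℓ * qpoch (-x) q ℓ) / (qpoch (x ^ 2) q ℓ * qpoch (-1) q ℓ) *
        ∑ i ∈ Finset.range (ℓ + 1), gosperCoeff q x ℓ i *
          (qpoch (x * q ^ i) q k * qpoch (q / (x * q ^ i)) q k / qpoch (-q) q k) := by
  induction ℓ with
  | zero => simp [gosperCoeff, ← div_eq_mul_inv, div_self hx2]
  | succ ℓ ih =>
    replace hgx := hgx (by omega)
    have hrec := gosperCoeff_sum_succ hq hgen hgx ℓ k
      (w := fun i => qpoch (x * q ^ i) q k * qpoch (q / (x * q ^ i)) q k / qpoch (-q) q k)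
      (fun i => by
        have s1 := qpoch_shift (x * q ^ i) q k
        have s2 := qpoch_shift (q / (x * q ^ (i + 1))) q k
        have hI := pow_ne_zero i hq
        have e1 : q / (x * q ^ (i + 1)) * q = q / (x * q ^ i) := by rw [pow_succ]; field_simp
        have e2 : q / (x * q ^ (i + 1)) = 1 / (x * q ^ i) := by rw [pow_succ]; field_simp
        rw [e1, e2] at s2
        have s2' : qpoch (1 / (x * q ^ i)) q k * (q ^ k - x * q ^ i) =
            (1 - x * q ^ i) * qpoch (q / (x * q ^ i)) q k := by
          have e3 : q ^ k - x * q ^ i = -(x * q ^ i) * (1 - 1 / (x * q ^ i) * q ^ k) := by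
            field_simp; ring
          have e4 : 1 - x * q ^ i = -(x * q ^ i) * (1 - 1 / (x * q ^ i)) := by
            field_simp; ring
          rw [e3, e4]
          linear_combination (-(x * q ^ i)) * s2
        have e5 : x * q ^ (i + 1) = x * q ^ i * q := by ring
        simp only [e2]
        rw [e5, div_mul_eq_mul_div, div_mul_eq_mul_div]
        congr 1
        linear_combination qpoch (x * q ^ i * q) q k * s2'
          - qpoch (q / (x * q ^ i)) q k * s1)
    rw [hrec]
    have hL := pow_ne_zero ℓ hq
    have hA : q ^ (1 - (ℓ + 1 : ℕ) : ℤ) = (q ^ ℓ)⁻¹ := by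
      rw [← zpow_natCast q ℓ, ← zpow_neg]; congr 1; push_cast; ring
    have hAq : q ^ (1 - ℓ : ℤ) = (q ^ ℓ)⁻¹ * q := by
      rw [← zpow_natCast q ℓ, ← zpow_neg, ← zpow_add_one₀ hq]; congr 1; ring
    have ih' := ih fun _ => hgx
    have s1 := qpoch_shift ((q ^ ℓ)⁻¹ / x) q k
    have s2 := qpoch_shift (-(q ^ ℓ)⁻¹) q k
    rw [hAq] at ih'
    rw [hA]
    rw [div_mul_eq_mul_div (q ^ ℓ)⁻¹ x q] at s1
    rw [neg_mul (q ^ ℓ)⁻¹ q] at s2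
    have f0 : q ^ k - x * q ^ ℓ ≠ 0 := fun h => by
      apply sq_mul_pow_ne_pow hq hgx (ℓ * 2) (k * 2)
      rw [pow_mul, pow_mul]
      linear_combination (-q ^ k - x * q ^ ℓ) * h
    have f1 := pow_add_pow_ne_zero_of_generic hq hgen k ℓ
    have f2 := pow_add_pow_ne_zero_of_generic hq hgen 0 ℓ
    have f4 := one_sub_sq_mul_pow_ne_zero hq hgx ℓ
    have f5 : 1 + x * q ^ ℓ ≠ 0 := fun h => by
      apply sq_mul_pow_ne_pow hq hgx (ℓ * 2) 0
      rw [pow_mul, pow_zero]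
      linear_combination (x * q ^ ℓ - 1) * h
    rw [pow_zero] at f2
    have hd (j : ℕ) : qpoch (-((q ^ ℓ)⁻¹ * q ^ j)) q k ≠ 0 := qpoch_ne_zero fun i _ h => by
      apply pow_add_pow_ne_zero_of_generic hq hgen ℓ (i + j)
      rw [pow_add]
      field_simp at h
      linear_combination -h
    have hd0 : qpoch (-(q ^ ℓ)⁻¹) q k ≠ 0 := by simpa using hd 0
    have hd1 : qpoch (-((q ^ ℓ)⁻¹ * q)) q k ≠ 0 := by simpa using hd 1
    have s1' : qpoch ((q ^ ℓ)⁻¹ / x) q k =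
        qpoch ((q ^ ℓ)⁻¹ * q / x) q k * ((1 - x * q ^ ℓ) / (q ^ k - x * q ^ ℓ)) := by
      rw [mul_div_assoc', eq_div_iff f0]
      field_simp at s1 ⊢
      linear_combination -s1
    have s2' : qpoch (-(q ^ ℓ)⁻¹) q k =
        qpoch (-((q ^ ℓ)⁻¹ * q)) q k * ((1 + q ^ ℓ) / (q ^ k + q ^ ℓ)) := by
      rw [mul_div_assoc', eq_div_iff f1]
      field_simp at s2 ⊢
      linear_combination s2
    rw [s1', s2']
    calc _ = (qpoch x q k * qpoch ((q ^ ℓ)⁻¹ * q / x) q k / qpoch (-((q ^ ℓ)⁻¹ * q)) q k) *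
        ((1 - x * q ^ ℓ) * (q ^ k + q ^ ℓ) / ((q ^ k - x * q ^ ℓ) * (1 + q ^ ℓ))) := by
          field_simp
      _ = _ := by
        rw [ih']
        simp only [qpoch_succ, neg_mul, one_mul, sub_neg_eq_add]
        field_simp

/-- The extended identity for `q` not a root of unity and `x` generic. -/
theorem gosper_extension_generic {s x : ℂ} (hs : s ^ 2 = q) (hq : q ≠ 0) (hx : x ≠ 0)
    (hgen : ∀ m : ℤ, m ≠ 0 → q ^ m ≠ 1) (hx2 : 1 - x ^ 2 / q ≠ 0) (ℓ n : ℕ)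
    (hgx : ℓ ≠ 0 → ∀ m : ℤ, x ^ 2 ≠ q ^ m) :
    ∑ k ∈ Finset.range (n + 1),
      qpoch (q ^ (-(3 * n : ℤ))) (q ^ 3) k *
        (qpoch x q k * qpoch (q ^ (1 - ℓ : ℤ) / x) q k) /
        (qpoch q q k * qpoch (-(q ^ (1 - ℓ : ℤ))) q k * qpoch s q k * qpoch (-s) q k *
          qpoch (q ^ (-(3 * n : ℤ))) q k) * q ^ k
      = (qpoch x q ℓ * qpoch (-x) q ℓ) / (qpoch (x ^ 2) q ℓ * qpoch (-1) q ℓ) *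
        ∑ i ∈ Finset.range (ℓ + 1), gosperCoeff q x ℓ i *
            ((qpoch (q ^ (1 + i) * x) (q ^ 3) n * qpoch (q ^ (2 - i : ℤ) / x) (q ^ 3) n) /
              (qpoch q (q ^ 3) n * qpoch (q ^ 2) (q ^ 3) n)) := by
  have hterm (i : ℕ) : (qpoch (q ^ (1 + i) * x) (q ^ 3) n *
      qpoch (q ^ (2 - i : ℤ) / x) (q ^ 3) n) / (qpoch q (q ^ 3) n * qpoch (q ^ 2) (q ^ 3) n) =
      ∑ k ∈ Finset.range (n + 1), gosperTerm q s (x * q ^ i) n k := by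
    rw [gosper_sum hs hq (mul_ne_zero hx (pow_ne_zero i hq)) hgen,
      show q * (x * q ^ i) = q ^ (1 + i) * x by ring,
      show q ^ 2 / (x * q ^ i) = q ^ (2 - i : ℤ) / x by
        rw [zpow_sub₀ hq, zpow_natCast, div_div, mul_comm x]; norm_cast]
  simp only [hterm, Finset.mul_sum]
  rw [Finset.sum_comm]
  refine Finset.sum_congr rfl fun k _ => ?_
  calc _ = qpoch (q ^ (-(3 * n : ℤ))) (q ^ 3) k /
      (qpoch q q k * qpoch s q k * qpoch (-s) q k * qpoch (q ^ (-(3 * n : ℤ))) q k) * q ^ k *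
      (qpoch x q k * qpoch (q ^ (1 - ℓ : ℤ) / x) q k / qpoch (-(q ^ (1 - ℓ : ℤ))) q k) := by
        simp only [div_eq_mul_inv, mul_inv]; ring
    _ = _ := by
      rw [extension_summand_eq hq hx hgen hx2 ℓ k hgx, Finset.mul_sum, Finset.mul_sum]
      refine Finset.sum_congr rfl fun i _ => ?_
      simp only [gosperTerm, div_eq_mul_inv, mul_inv]
      ring

end Generic

theorem dense_generic_sq (x : ℂ) :
    Dense {s : ℂ | s ≠ 0 ∧ ∀ m : ℤ, m ≠ 0 → (s ^ 2) ^ m ≠ 1 ∧ x ^ 2 ≠ (s ^ 2) ^ m} := by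
  have hfin (m : ℤ) (hm : m ≠ 0) (c : ℂ) : {s : ℂ | s ≠ 0 ∧ (s ^ 2) ^ m = c}.Finite := by
    have hpos : 0 < 2 * m.natAbs := by omega
    have hroots (d : ℂ) : {s : ℂ | s ^ (2 * m.natAbs) = d}.Finite := by
      refine (Polynomial.nthRoots (2 * m.natAbs) d).toFinset.finite_toSet.subset fun s hs => ?_
      simpa [Polynomial.mem_nthRoots hpos] using hs
    refine ((hroots c).union (hroots c⁻¹)).subset fun s hs => ?_
    obtain ⟨-, hs⟩ := hs
    rcases Int.natAbs_eq m with h | h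
    · left
      rw [h, zpow_natCast, ← pow_mul] at hs
      exact hs
    · right
      rw [h, zpow_neg, zpow_natCast, ← pow_mul] at hs
      exact inv_eq_iff_eq_inv.mp hs
  have hcount : ({0} ∪ ⋃ m : {m : ℤ // m ≠ 0}, ({s : ℂ | s ≠ 0 ∧ (s ^ 2) ^ (m : ℤ) = 1} ∪
      {s : ℂ | s ≠ 0 ∧ (s ^ 2) ^ (m : ℤ) = x ^ 2})).Countable :=
    (Set.countable_singleton 0).union <| Set.countable_iUnion fun m =>
      (hfin m m.2 1).countable.union (hfin m m.2 (x ^ 2)).countable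
  refine (hcount.dense_compl ℝ).mono fun s hs => ?_
  simp only [Set.mem_compl_iff, Set.mem_union, Set.mem_singleton_iff, Set.mem_iUnion,
    Set.mem_ofPred_eq, not_or, not_exists, Subtype.forall] at hs
  exact ⟨hs.1, fun m hm => ⟨fun h => (hs.2 m hm).1 ⟨hs.1, h⟩,
    fun h => (hs.2 m hm).2 ⟨hs.1, h.symm⟩⟩⟩

theorem q_gosper_first_extension (ℓ n : ℕ) (q x s : ℂ) (hs : s ^ 2 = q)
    (hq : q ≠ 0) (hx : x ≠ 0)
    (hden : ∀ k ≤ n,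
      qpoch q q k * qpoch (-(q ^ (1 - ℓ : ℤ))) q k * qpoch s q k * qpoch (-s) q k *
        qpoch (q ^ (-(3*n : ℤ))) q k ≠ 0)
    (hdenℓ : qpoch (x^2) q ℓ * qpoch (-1) q ℓ ≠ 0)
    (hdeni : ∀ i ≤ ℓ, qpoch q q i * qpoch (x^2 * q^ℓ) q i ≠ 0)
    (hx2 : 1 - x^2 / q ≠ 0)
    (hden2 : qpoch q (q^3) n * qpoch (q^2) (q^3) n ≠ 0) :
    ∑ k ∈ Finset.range (n+1),
      qpoch (q ^ (-(3*n : ℤ))) (q^3) k *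
        (qpoch x q k * qpoch (q ^ (1 - ℓ : ℤ) / x) q k) /
        (qpoch q q k * qpoch (-(q ^ (1 - ℓ : ℤ))) q k * qpoch s q k * qpoch (-s) q k *
          qpoch (q ^ (-(3*n : ℤ))) q k) * q^k
      = (qpoch x q ℓ * qpoch (-x) q ℓ) / (qpoch (x^2) q ℓ * qpoch (-1) q ℓ) *
        ∑ i ∈ Finset.range (ℓ+1),
          (-1 : ℂ)^i * q^(ℓ*i) * ((1 - x^2 * q ^ (2*(i : ℤ) - 1)) / (1 - x^2 / q)) *
            (qpoch (q ^ (-(ℓ : ℤ))) q i * qpoch (x^2 / q) q i) /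
            (qpoch q q i * qpoch (x^2 * q^ℓ) q i) *
            ((qpoch (q^(1+i)*x) (q^3) n * qpoch (q ^ (2 - i : ℤ) / x) (q^3) n) /
              (qpoch q (q^3) n * qpoch (q^2) (q^3) n)) := by
  subst hs
  have hs0 : s ≠ 0 := fun h => hq (by simp [h])
  have hx1 : ℓ ≠ 0 → x ^ 2 ≠ 1 := fun hℓ h => by
    apply left_ne_zero_of_mul hdenℓ
    exact Finset.prod_eq_zero (Finset.mem_range.mpr (Nat.pos_of_ne_zero hℓ)) (by simp [h])
  have hclosure := dense_generic_sq x s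
  rw [mem_closure_iff_nhdsWithin_neBot] at hclosure
  have hc : ContinuousAt (fun t : ℂ => t ^ 2) s := (continuous_pow 2).continuousAt
  have hz (m : ℤ) : ContinuousAt (fun t : ℂ => (t ^ 2) ^ m) s := hc.zpow₀ m (Or.inl hq)
  refine tendsto_nhds_unique_of_eventuallyEq
    (l := nhdsWithin s {s : ℂ | s ≠ 0 ∧ ∀ m : ℤ, m ≠ 0 → (s ^ 2) ^ m ≠ 1 ∧ x ^ 2 ≠ (s ^ 2) ^ m})
    (f := fun t => ∑ k ∈ Finset.range (n + 1),
      qpoch ((t ^ 2) ^ (-(3 * n : ℤ))) ((t ^ 2) ^ 3) k *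
        (qpoch x (t ^ 2) k * qpoch ((t ^ 2) ^ (1 - ℓ : ℤ) / x) (t ^ 2) k) /
        (qpoch (t ^ 2) (t ^ 2) k * qpoch (-((t ^ 2) ^ (1 - ℓ : ℤ))) (t ^ 2) k *
          qpoch t (t ^ 2) k * qpoch (-t) (t ^ 2) k *
          qpoch ((t ^ 2) ^ (-(3 * n : ℤ))) (t ^ 2) k) * (t ^ 2) ^ k)
    (g := fun t => (qpoch x (t ^ 2) ℓ * qpoch (-x) (t ^ 2) ℓ) /
      (qpoch (x ^ 2) (t ^ 2) ℓ * qpoch (-1) (t ^ 2) ℓ) *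
        ∑ i ∈ Finset.range (ℓ + 1), gosperCoeff (t ^ 2) x ℓ i *
          ((qpoch ((t ^ 2) ^ (1 + i) * x) ((t ^ 2) ^ 3) n *
            qpoch ((t ^ 2) ^ (2 - i : ℤ) / x) ((t ^ 2) ^ 3) n) /
            (qpoch (t ^ 2) ((t ^ 2) ^ 3) n * qpoch ((t ^ 2) ^ 2) ((t ^ 2) ^ 3) n)))
    ?_ ?_ ?_
  · refine Filter.Tendsto.mono_left (tendsto_finsetSum _ fun k hk => ?_) nhdsWithin_le_nhds
    have hk' : k ≤ n := Nat.lt_succ_iff.mp (Finset.mem_range.mp hk)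
    exact (ContinuousAt.div
      (((hz _).qpoch (hc.pow 3) k).mul ((continuousAt_const.qpoch hc k).mul
        (((hz _).div_const x).qpoch hc k)))
      (((((hc.qpoch hc k).mul ((hz _).neg.qpoch hc k)).mul (continuousAt_id.qpoch hc k)).mul
        (continuousAt_id.neg.qpoch hc k)).mul ((hz _).qpoch hc k)) (hden k hk')).mul (hc.pow k)
  · refine Filter.Tendsto.mono_left (Filter.Tendsto.mul ?_ (tendsto_finsetSum _ fun i hi => ?_))
      nhdsWithin_le_nhds
    · exact ContinuousAt.div
        ((continuousAt_const.qpoch hc ℓ).mul (continuousAt_const.qpoch hc ℓ))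
        ((continuousAt_const.qpoch hc ℓ).mul (continuousAt_const.qpoch hc ℓ)) hdenℓ
    · have hi' : i ≤ ℓ := Nat.lt_succ_iff.mp (Finset.mem_range.mp hi)
      have hxq : ContinuousAt (fun t : ℂ => x ^ 2 / t ^ 2) s := continuousAt_const.div hc hq
      refine Filter.Tendsto.mul ?_ ?_
      · exact ContinuousAt.div
          (((continuousAt_const.mul (hc.pow _)).mul (ContinuousAt.div
            (continuousAt_const.sub (continuousAt_const.mul (hz _)))
            (continuousAt_const.sub hxq) hx2)).mul
            (((hz _).qpoch hc i).mul (hxq.qpoch hc i)))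
          ((hc.qpoch hc i).mul ((continuousAt_const.mul (hc.pow ℓ)).qpoch hc i)) (hdeni i hi')
      · exact ContinuousAt.div
          ((((hc.pow _).mul continuousAt_const).qpoch (hc.pow 3) n).mul
            (((hz _).div_const x).qpoch (hc.pow 3) n))
          ((hc.qpoch (hc.pow 3) n).mul ((hc.pow 2).qpoch (hc.pow 3) n)) hden2
  · refine eventually_nhdsWithin_of_forall fun t ⟨ht0, ht⟩ => ?_
    have ht2 : t ^ 2 ≠ 0 := pow_ne_zero 2 ht0
    refine gosper_extension_generic rfl ht2 hx (fun m hm => (ht m hm).1) ?_ ℓ n fun hℓ m => ?_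
    · rw [sub_ne_zero, ne_comm, Ne, div_eq_one_iff_eq ht2]
      simpa using (ht 1 one_ne_zero).2
    · rcases eq_or_ne m 0 with rfl | hm
      · simpa using hx1 hℓ
      · exact (ht m hm).2
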